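/- Let X^m and Y^m be jointly distributed random variables taking values in finite sets. Then the directed information decomposes as I(X^m → Y^m) = I_inst(X^m, Y^m) + I(D^1 ∘ X^m → Y^m), i.e., directed information equals the instantaneous information plus the one-step delayed directed information. -/

import Mathlib

open MeasureTheory Finset

variable {Ω : Type*} [MeasurableSpace Ω]

/-- Shannon entropy of a random variable `W` with values in a finite set:
`H(W) = -∑ w, P(W = w) log P(W = w)`. -/
noncomputable def entropy (μ : Measure Ω) {α : Type*} [Fintype α] (W : Ω → α) : ℝ :=
  -∑ w : α, (μ (W ⁻¹' {w})).toReal * Real.log (μ (W ⁻¹' {w})).toReal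

/-- Conditional entropy `H(W | V) = H(W, V) - H(V)`. -/
noncomputable def condEntropy (μ : Measure Ω) {α β : Type*} [Fintype α] [Fintype β]
    (W : Ω → α) (V : Ω → β) : ℝ :=
  entropy μ (fun ω => (W ω, V ω)) - entropy μ V

/-- Conditional mutual information `I(A; B | C) = H(A|C) + H(B|C) - H(A,B|C)`. -/
noncomputable def condMI (μ : Measure Ω) {α β γ : Type*} [Fintype α] [Fintype β] [Fintype γ]
    (A : Ω → α) (B : Ω → β) (C : Ω → γ) : ℝ :=
  condEntropy μ A C + condEntropy μ B C - condEntropy μ (fun ω => (A ω, B ω)) C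

/-- Mutual information `I(A; B) = H(A) + H(B) - H(A,B)`. -/
noncomputable def mutualInfo (μ : Measure Ω) {α β : Type*} [Fintype α] [Fintype β]
    (A : Ω → α) (B : Ω → β) : ℝ :=
  entropy μ A + entropy μ B - entropy μ (fun ω => (A ω, B ω))

/-- The prefix `X^i = (X_1, …, X_i)` of the sequence `X` (1-based indexing);
`X^0` is the empty (constant) random variable. -/
def pref {𝒳 : Type*} (X : ℕ → Ω → 𝒳) (i : ℕ) : Ω → (Fin i → 𝒳) :=
  fun ω t => X (t.1 + 1) ω

/-- The InfoMat entry `I_{i,j} = I(X_i; Y_j | X^{i-1}, Y^{j-1})`. -/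
noncomputable def infoMat (μ : Measure Ω) {𝒳 𝒴 : Type*} [Fintype 𝒳] [Fintype 𝒴]
    (X : ℕ → Ω → 𝒳) (Y : ℕ → Ω → 𝒴) (i j : ℕ) : ℝ :=
  condMI μ (X i) (Y j) (fun ω => (pref X (i - 1) ω, pref Y (j - 1) ω))

/-- Directed information `I(X^m → Y^m) = ∑_{i=1}^m I(X^i; Y_i | Y^{i-1})`. -/
noncomputable def directedInfo (μ : Measure Ω) {𝒳 𝒴 : Type*} [Fintype 𝒳] [Fintype 𝒴]
    (m : ℕ) (X : ℕ → Ω → 𝒳) (Y : ℕ → Ω → 𝒴) : ℝ :=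
  ∑ i ∈ Finset.Icc 1 m, condMI μ (pref X i) (Y i) (pref Y (i - 1))

/-- `k`-step delayed directed information
`I(D^k ∘ X^m → Y^m) = ∑_{i=k+1}^m I(X^{i-k}; Y_i | Y^{i-1})`. -/
noncomputable def delayedDI (μ : Measure Ω) {𝒳 𝒴 : Type*} [Fintype 𝒳] [Fintype 𝒴]
    (m k : ℕ) (X : ℕ → Ω → 𝒳) (Y : ℕ → Ω → 𝒴) : ℝ :=
  ∑ i ∈ Finset.Icc (k + 1) m, condMI μ (pref X (i - k)) (Y i) (pref Y (i - 1))

/-- Instantaneous information `I_inst(X^m, Y^m) = ∑_{i=1}^m I(X_i; Y_i | X^{i-1}, Y^{i-1})`. -/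
noncomputable def instInfo (μ : Measure Ω) {𝒳 𝒴 : Type*} [Fintype 𝒳] [Fintype 𝒴]
    (m : ℕ) (X : ℕ → Ω → 𝒳) (Y : ℕ → Ω → 𝒴) : ℝ :=
  ∑ i ∈ Finset.Icc 1 m, infoMat μ X Y i i

variable {𝒳 𝒴 : Type*} [Fintype 𝒳] [MeasurableSpace 𝒳] [MeasurableSingletonClass 𝒳]
  [Fintype 𝒴] [MeasurableSpace 𝒴] [MeasurableSingletonClass 𝒴]

/-!
The chain rule `I(A, B; D | C) = I(A; D | C) + I(B; D | A, C)` splits off the last letter of the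
prefix `X^{i-k}`, so each term `I(X^{i-k}; Y_i | Y^{i-1})` of the `k`-step delayed directed
information is the entry `I_{i-k,i}` plus the corresponding term for delay `k + 1`. Summing over `i`
moves from delay `k` to delay `k + 1`; the theorem is the case `k = 0`. The chain rule itself only
uses that entropy is unchanged under injective relabelling of values.
-/

theorem pref_succ {Ω α : Type*} (X : ℕ → Ω → α) (n : ℕ) :
    pref X (n + 1) = fun ω => Fin.snoc (α := fun _ => α) (pref X n ω) (X (n + 1) ω) := by
  ext ω t
  cases t using Fin.lastCases <;> simp [pref]

section

variable (μ : Measure Ω) {α β γ δ : Type*} [Fintype α] [Fintype β] [Fintype γ] [Fintype δ]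

theorem entropy_comp_of_injective (W : Ω → α) {f : α → β} (hf : Function.Injective f) :
    entropy μ (fun ω => f (W ω)) = entropy μ W := by
  have preimage_of_mem (a : α) : (fun ω => f (W ω)) ⁻¹' {f a} = W ⁻¹' {a} := by
    ext ω
    simp [hf.eq_iff]
  have preimage_of_notMem {b : β} (hb : b ∉ Set.range f) : (fun ω => f (W ω)) ⁻¹' {b} = ∅ :=
    Set.eq_empty_of_forall_notMem fun ω hω => hb ⟨W ω, hω⟩
  unfold entropy
  congr 1
  refine (Fintype.sum_of_injective f hf _ _ (fun b hb => ?_) fun a => ?_).symm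
  · simp [preimage_of_notMem hb]
  · rw [preimage_of_mem]

theorem condMI_comp_left_of_injective (A : Ω → α) (B : Ω → β) (C : Ω → γ) {f : α → δ}
    (hf : Function.Injective f) : condMI μ (fun ω => f (A ω)) B C = condMI μ A B C := by
  have relabel_AC : entropy μ (fun ω => (f (A ω), C ω)) = entropy μ (fun ω => (A ω, C ω)) :=
    entropy_comp_of_injective μ (fun ω => (A ω, C ω)) (hf.prodMap Function.injective_id)
  have relabel_ABC : entropy μ (fun ω => ((f (A ω), B ω), C ω)) =
      entropy μ (fun ω => ((A ω, B ω), C ω)) :=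
    entropy_comp_of_injective μ (fun ω => ((A ω, B ω), C ω)) (f := Prod.map (Prod.map f id) id)
      ((hf.prodMap Function.injective_id).prodMap Function.injective_id)
  unfold condMI condEntropy
  rw [relabel_AC, relabel_ABC]

theorem condMI_of_subsingleton_left [Subsingleton α] (A : Ω → α) (B : Ω → β) (C : Ω → γ) :
    condMI μ A B C = 0 := by
  have drop_A_AC : entropy μ (fun ω => (A ω, C ω)) = entropy μ C :=
    (entropy_comp_of_injective μ (fun ω => (A ω, C ω)) Prod.snd_injective).symm
  have drop_A_ABC : entropy μ (fun ω => ((A ω, B ω), C ω)) = entropy μ (fun ω => (B ω, C ω)) :=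
    (entropy_comp_of_injective μ (fun ω => ((A ω, B ω), C ω)) (f := Prod.map Prod.snd id)
      (Prod.snd_injective.prodMap Function.injective_id)).symm
  unfold condMI condEntropy
  rw [drop_A_AC, drop_A_ABC]
  ring

theorem entropy_prod_left_comm (A : Ω → α) (B : Ω → β) (C : Ω → γ) :
    entropy μ (fun ω => (A ω, B ω, C ω)) = entropy μ (fun ω => ((B ω, A ω), C ω)) :=
  entropy_comp_of_injective μ (fun ω => ((B ω, A ω), C ω)) (f := fun p => (p.1.2, p.1.1, p.2))
    fun p q h => by grind

theorem condMI_prod_left (A : Ω → α) (B : Ω → β) (D : Ω → δ) (C : Ω → γ) :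
    condMI μ (fun ω => (A ω, B ω)) D C =
      condMI μ B D (fun ω => (A ω, C ω)) + condMI μ A D C := by
  have assoc : entropy μ (fun ω => ((A ω, B ω, D ω), C ω)) =
      entropy μ (fun ω => (((A ω, B ω), D ω), C ω)) :=
    entropy_comp_of_injective μ (fun ω => (((A ω, B ω), D ω), C ω))
      ((Equiv.prodAssoc α β δ).injective.prodMap Function.injective_id)
  unfold condMI condEntropy
  rw [entropy_prod_left_comm μ B A C, entropy_prod_left_comm μ D A C,
    entropy_prod_left_comm μ (fun ω => (B ω, D ω)) A C, assoc]
  ring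

theorem condMI_pref_succ (X : ℕ → Ω → α) (n : ℕ) (B : Ω → β) (C : Ω → γ) :
    condMI μ (pref X (n + 1)) B C =
      condMI μ (X (n + 1)) B (fun ω => (pref X n ω, C ω)) + condMI μ (pref X n) B C := by
  rw [pref_succ, ← condMI_prod_left]
  exact condMI_comp_left_of_injective μ (fun ω => (pref X n ω, X (n + 1) ω)) B C
    (f := Function.uncurry (Fin.snoc (α := fun _ => α))) Fin.snoc_injective2.uncurry

-- The extra term `i = k` involves the empty prefix `X^0`, hence vanishes.
theorem delayedDI_eq_sum_Icc (m k : ℕ) (X : ℕ → Ω → α) (Y : ℕ → Ω → β) :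
    delayedDI μ m k X Y =
      ∑ i ∈ Icc k m, condMI μ (pref X (i - k)) (Y i) (pref Y (i - 1)) := by
  refine sum_subset (Icc_subset_Icc_left k.le_succ) fun i hi hi' => ?_
  obtain rfl : i = k := by
    simp only [mem_Icc] at hi hi'
    omega
  rw [Nat.sub_self]
  exact condMI_of_subsingleton_left μ _ _ _

theorem directedInfo_eq_instInfo_add_delayedDI_general (m k : ℕ) (X : ℕ → Ω → α)
    (Y : ℕ → Ω → β) :
    delayedDI μ m k X Y =
      ∑ i ∈ Icc (k + 1) m, infoMat μ X Y (i - k) i + delayedDI μ m (k + 1) X Y := by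
  rw [delayedDI_eq_sum_Icc μ m (k + 1), ← sum_add_distrib]
  refine sum_congr rfl fun i hi => ?_
  obtain ⟨n, rfl⟩ := Nat.exists_eq_add_of_le (mem_Icc.1 hi).1
  have delay_eq : k + 1 + n - k = n + 1 := by omega
  have delay_succ_eq : k + 1 + n - (k + 1) = n := by omega
  rw [delay_eq, delay_succ_eq]
  exact condMI_pref_succ μ X n _ _

end

/-- Directed information equals the instantaneous information plus the one-step
delayed directed information: `I(X^m → Y^m) = I_inst(X^m, Y^m) + I(D^1 ∘ X^m → Y^m)`. -/
theorem directedInfo_eq_instInfo_add_delayedDI (μ : Measure Ω) [IsProbabilityMeasure μ]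
    (m : ℕ) (X : ℕ → Ω → 𝒳) (Y : ℕ → Ω → 𝒴)
    (hX : ∀ i, Measurable (X i)) (hY : ∀ j, Measurable (Y j)) :
    directedInfo μ m X Y = instInfo μ m X Y + delayedDI μ m 1 X Y :=
  directedInfo_eq_instInfo_add_delayedDI_general μ m 0 X Y
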